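/- Let A = {0,1,2} and N = 10, and for K ≥ 0 let m(K) denote the minimum, over all subsets Y of A^{N+K} of cardinality 3^N, of the average (1/3^N) · Σ_{y ∈ Y} I(y) of empirical information content, where I(s) = −Σ_{j=1}^{L} log₂(n_{s_j}/L) for a string s of length L with symbol counts n_a. Then K = 4 is the optimal shaping order in the range considered: m(4) < m(K) for every K ∈ {0,1,2,3,5,6,7}. -/

import Mathlib

open Finset

/-- Empirical information content of a string `s` of length `L` over an alphabet `A`:
`I(s) = -∑_{j=1}^{L} log₂ (n_{s_j} / L)`, where `n_a` is the number of occurrences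
of the symbol `a` in `s`. -/
noncomputable def info {A : Type*} [DecidableEq A] {L : ℕ} (s : Fin L → A) : ℝ :=
  -∑ j : Fin L, Real.logb 2 (((univ.filter fun i => s i = s j).card : ℝ) / L)

/-- `m K` is the minimum, over all subsets `Y` of `A^{10+K}` (with `A = {0,1,2}`)
of cardinality `3^10`, of the average empirical information content
`(1/3^10) · ∑_{y ∈ Y} I(y)`. -/
noncomputable def m (K : ℕ) : ℝ :=
  ((univ : Finset (Fin (10 + K) → Fin 3)).powersetCard (3 ^ 10)).inf'
    (Finset.powersetCard_nonempty.mpr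
      (by
        simp only [Finset.card_univ, Fintype.card_fun, Fintype.card_fin]
        exact Nat.pow_le_pow_right (by norm_num) (by omega)))
    (fun Y => (∑ y ∈ Y, info y) / 3 ^ 10)

/-! The information content of a string depends only on its symbol counts, and the number of
strings with counts `n` is a multinomial coefficient, so sums over all strings become short sums
over count vectors. For any threshold `t`, Lagrangian duality bounds the total information of `k`
strings below by `k t - ∑ s, (t - I(s))⁺`, with equality when the `k` strings contain every `s` with
`I(s) < t` and none with `I(s) > t`. Rounding `1000 log₂ n` to integers turns these bounds into
integer certificates, which separate `m 4` from the other values at `13.4`. -/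

section LagrangeDuality

variable {ι R : Type*} [AddCommGroup R] [LinearOrder R] [IsOrderedAddMonoid R]
  {s Y : Finset ι}

lemma card_nsmul_sub_sum_posPart_le_sum (hYs : Y ⊆ s) (f : ι → R) (t : R) :
    #Y • t - ∑ i ∈ s, (t - f i)⁺ ≤ ∑ i ∈ Y, f i := by
  rw [sub_le_comm, ← sum_const, ← sum_sub_distrib]
  calc ∑ i ∈ Y, (t - f i) ≤ ∑ i ∈ Y, (t - f i)⁺ := sum_le_sum fun i _ => le_posPart _
    _ ≤ ∑ i ∈ s, (t - f i)⁺ :=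
      sum_le_sum_of_subset_of_nonneg hYs fun i _ _ => posPart_nonneg _

lemma sum_eq_card_nsmul_sub_sum_posPart {f : ι → R} {t : R}
    (hYs : Y ⊆ s) (hY : ∀ i ∈ Y, f i ≤ t) (hYc : ∀ i ∈ s, i ∉ Y → t ≤ f i) :
    ∑ i ∈ Y, f i = #Y • t - ∑ i ∈ s, (t - f i)⁺ := by
  classical
  have h_sum : ∑ i ∈ s, (t - f i)⁺ = ∑ i ∈ Y, (t - f i) := by
    rw [← sum_subset hYs fun i hi hiY => posPart_eq_zero.2 (sub_nonpos.2 (hYc i hi hiY))]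
    exact sum_congr rfl fun i hi => posPart_eq_self.2 (sub_nonneg.2 (hY i hi))
  rw [h_sum, sum_sub_distrib, sum_const, sub_sub_cancel]

lemma exists_card_eq_sum_eq_nsmul_sub_sum_posPart {f : ι → R} {k : ℕ} {t : R}
    (h_lt : #{i ∈ s | f i < t} ≤ k) (h_le : k ≤ #{i ∈ s | f i ≤ t}) :
    ∃ Y ⊆ s, #Y = k ∧ ∑ i ∈ Y, f i = k • t - ∑ i ∈ s, (t - f i)⁺ := by
  classical
  obtain ⟨Y, h_ltY, hY_le, rfl⟩ := exists_subsuperset_card_eq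
    (monotone_filter_right s fun i _ (hi : f i < t) => hi.le) h_lt h_le
  have hYs : Y ⊆ s := hY_le.trans (filter_subset _ _)
  refine ⟨Y, hYs, rfl, sum_eq_card_nsmul_sub_sum_posPart hYs ?_ ?_⟩
  · exact fun i hi => (mem_filter.1 (hY_le hi)).2
  · exact fun i hi hiY => not_lt.1 fun hlt => hiY (h_ltY (mem_filter.2 ⟨hi, hlt⟩))

end LagrangeDuality

section SymbolCount

variable {A : Type*} [DecidableEq A] {L : ℕ}

/-- The vector of symbol counts of a string, called its *type* in information theory. -/
def symbolCount (s : Fin L → A) (a : A) : ℕ := #{j | s j = a}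

variable [Fintype A]

lemma sum_symbolCount (s : Fin L → A) : ∑ a, symbolCount s a = L := by
  simpa [symbolCount] using (card_eq_sum_card_fiberwise (f := s) (s := univ) (t := univ)
    fun _ _ => mem_coe.2 (mem_univ _)).symm

@[to_additive]
lemma prod_comp_eq_prod_pow_symbolCount {M : Type*} [CommMonoid M] (f : A → M)
    (s : Fin L → A) : ∏ j, f (s j) = ∏ a, f a ^ symbolCount s a := by
  simp only [← prod_fiberwise' univ s f, prod_const, symbolCount]

lemma symbolCount_mem_piAntidiag (s : Fin L → A) : symbolCount s ∈ piAntidiag univ L := by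
  simp [sum_symbolCount]

open MvPolynomial in
/-- Compare the coefficients of `∏ a, X a ^ n a` in `(∑ a, X a) ^ L`. -/
lemma card_filter_symbolCount_eq {n : A → ℕ} (hn : ∑ a, n a = L) :
    #{s : Fin L → A | symbolCount s = n} = Nat.multinomial univ n := by
  let d : A →₀ ℕ := Finsupp.equivFunOnFinite.symm n
  have h_coeff (s : Fin L → A) :
      coeff d (∏ j, X (s j) : MvPolynomial A ℕ) = if symbolCount s = n then 1 else 0 := by
    rw [prod_comp_eq_prod_pow_symbolCount X, coeff_prod_X_pow]
    congr 1
    simp [Finsupp.ext_iff, funext_iff, d, eq_comm]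
  calc #{s : Fin L → A | symbolCount s = n}
      = coeff d ((∑ a, X a : MvPolynomial A ℕ) ^ L) := by
        rw [Fintype.sum_pow, coeff_sum, card_filter]
        exact sum_congr rfl fun s _ => (h_coeff s).symm
    _ = d.multinomial := by
        have hd : d.sum (fun _ i => i) = L := (Finsupp.sum_fintype _ _ fun _ => rfl).trans hn
        rw [coeff_sum_X_pow_of_fintype, if_pos hd, Nat.cast_id]
    _ = Nat.multinomial univ n := (Finsupp.multinomial_of_support_subset (subset_univ _)).symm

lemma sum_comp_symbolCount {M : Type*} [AddCommMonoid M] (g : (A → ℕ) → M) :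
    ∑ s : Fin L → A, g (symbolCount s) =
      ∑ n ∈ piAntidiag univ L, Nat.multinomial univ n • g n := by
  rw [← sum_fiberwise_of_maps_to' fun s _ => symbolCount_mem_piAntidiag s]
  refine sum_congr rfl fun n hn => ?_
  rw [sum_const, card_filter_symbolCount_eq (mem_piAntidiag.1 hn).1]

lemma card_filter_symbolCount (p : (A → ℕ) → Prop) [DecidablePred p] :
    #{s : Fin L → A | p (symbolCount s)} =
      ∑ n ∈ piAntidiag univ L with p n, Nat.multinomial univ n := by
  rw [card_filter, sum_comp_symbolCount fun n => if p n then 1 else 0, sum_filter]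
  simp only [smul_eq_mul, mul_ite, mul_one, mul_zero]

end SymbolCount

section Info

variable {A : Type*} [Fintype A]

/-- The empirical information content of any string with symbol counts `n`. -/
noncomputable def typeInfo (n : A → ℕ) : ℝ :=
  (∑ a, n a : ℕ) * Real.logb 2 (∑ a, n a : ℕ) - ∑ a, n a * Real.logb 2 (n a)

lemma info_eq_typeInfo [DecidableEq A] {L : ℕ} (s : Fin L → A) :
    info s = typeInfo (symbolCount s) := by
  have h_logb (j : Fin L) : Real.logb 2 ((#{i | s i = s j} : ℝ) / L) =
      Real.logb 2 (symbolCount s (s j)) - Real.logb 2 L := by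
    have h_count : #{i | s i = s j} ≠ 0 := (card_pos.2 ⟨j, by simp⟩).ne'
    have hL : L ≠ 0 := j.pos.ne'
    exact Real.logb_div (mod_cast h_count) (mod_cast hL)
  simp only [info, h_logb, sum_sub_distrib,
    sum_comp_eq_sum_nsmul_symbolCount fun a => Real.logb 2 (symbolCount s a), typeInfo,
    sum_symbolCount, sum_const, card_univ, Fintype.card_fin, nsmul_eq_mul, neg_sub]

lemma natLog_pow_le_mul_logb (d n : ℕ) : (Nat.log 2 (n ^ d) : ℝ) ≤ d * Real.logb 2 n := by
  simpa [Real.logb_pow] using Real.natLog_le_logb (n ^ d) 2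

lemma mul_logb_lt_natLog_pow_add_one (d n : ℕ) :
    d * Real.logb 2 n < Nat.log 2 (n ^ d) + 1 := by
  have h := Nat.lt_floor_add_one (Real.logb (2 : ℕ) (n ^ d : ℕ))
  rw [Real.natFloor_logb_natCast] at h
  simpa [Real.logb_pow] using h

/-- A lower approximation of `d * typeInfo n`, from `⌊d log₂ x⌋ = Nat.log 2 (x ^ d)`. -/
def infoLower (d : ℕ) (n : A → ℕ) : ℤ :=
  (∑ a, n a : ℕ) * Nat.log 2 ((∑ a, n a) ^ d) - ∑ a, n a * (Nat.log 2 (n a ^ d) + 1 : ℤ)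

/-- An upper approximation of `d * typeInfo n`, from `⌊d log₂ x⌋ = Nat.log 2 (x ^ d)`. -/
def infoUpper (d : ℕ) (n : A → ℕ) : ℤ :=
  (∑ a, n a : ℕ) * (Nat.log 2 ((∑ a, n a) ^ d) + 1 : ℤ) - ∑ a, n a * (Nat.log 2 (n a ^ d) : ℤ)

lemma infoLower_le_mul_typeInfo (d : ℕ) (n : A → ℕ) : (infoLower d n : ℝ) ≤ d * typeInfo n := by
  simp only [infoLower, typeInfo, Int.cast_sub, Int.cast_mul, Int.cast_sum, Int.cast_add,
    Int.cast_natCast, Int.cast_one, mul_sub, mul_sum, mul_left_comm (d : ℝ)]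
  gcongr
  · exact natLog_pow_le_mul_logb d _
  · exact (mul_logb_lt_natLog_pow_add_one d _).le

lemma mul_typeInfo_le_infoUpper (d : ℕ) (n : A → ℕ) : d * typeInfo n ≤ (infoUpper d n : ℝ) := by
  simp only [infoUpper, typeInfo, Int.cast_sub, Int.cast_mul, Int.cast_sum, Int.cast_add,
    Int.cast_natCast, Int.cast_one, mul_sub, mul_sum, mul_left_comm (d : ℝ)]
  gcongr
  · exact (mul_logb_lt_natLog_pow_add_one d _).le
  · exact natLog_pow_le_mul_logb d _

variable [DecidableEq A] {L : ℕ}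

lemma card_mul_sub_sum_posPart_le_mul_sum_info (d : ℕ) (t : ℤ) (Y : Finset (Fin L → A)) :
    ((#Y * t - ∑ n ∈ piAntidiag (univ : Finset A) L,
        Nat.multinomial univ n • (t - infoLower d n)⁺ : ℤ) : ℝ) ≤
      d * ∑ y ∈ Y, info y := by
  rw [← sum_comp_symbolCount fun n => (t - infoLower d n)⁺, ← nsmul_eq_mul]
  calc ((#Y • t - ∑ s : Fin L → A, (t - infoLower d (symbolCount s))⁺ : ℤ) : ℝ)
      ≤ (∑ y ∈ Y, infoLower d (symbolCount y) : ℤ) :=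
        mod_cast card_nsmul_sub_sum_posPart_le_sum (subset_univ Y) _ t
    _ ≤ d * ∑ y ∈ Y, info y := by
        rw [Int.cast_sum, mul_sum]
        gcongr with y
        exact info_eq_typeInfo y ▸ infoLower_le_mul_typeInfo d _

lemma exists_card_eq_mul_sum_info_le {d k : ℕ} {t : ℤ}
    (h_lt : ∑ n ∈ piAntidiag (univ : Finset A) L with infoUpper d n < t,
      Nat.multinomial univ n ≤ k)
    (h_le : k ≤ ∑ n ∈ piAntidiag (univ : Finset A) L with infoUpper d n ≤ t,
      Nat.multinomial univ n) :
    ∃ Y : Finset (Fin L → A), #Y = k ∧ d * ∑ y ∈ Y, info y ≤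
      (k * t - ∑ n ∈ piAntidiag (univ : Finset A) L,
        Nat.multinomial univ n • (t - infoUpper d n)⁺ : ℤ) := by
  rw [← card_filter_symbolCount] at h_lt h_le
  obtain ⟨Y, -, hYk, h_sum⟩ := exists_card_eq_sum_eq_nsmul_sub_sum_posPart h_lt h_le
  refine ⟨Y, hYk, ?_⟩
  rw [← sum_comp_symbolCount fun n => (t - infoUpper d n)⁺, ← nsmul_eq_mul (k : ℕ) t,
    ← h_sum, Int.cast_sum, mul_sum]
  gcongr with y
  exact info_eq_typeInfo y ▸ mul_typeInfo_le_infoUpper d _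

end Info

lemma exists_mul_m_eq_sum_info (K : ℕ) :
    ∃ Y : Finset (Fin (10 + K) → Fin 3), #Y = 3 ^ 10 ∧ 3 ^ 10 * m K = ∑ y ∈ Y, info y := by
  obtain ⟨Y, hY, hm⟩ := exists_mem_eq_inf' (s := powersetCard (3 ^ 10) univ) _
    fun Y : Finset (Fin (10 + K) → Fin 3) => (∑ y ∈ Y, info y) / 3 ^ 10
  exact ⟨Y, (mem_powersetCard.1 hY).2, by rw [m, hm, mul_div_cancel₀ _ (by norm_num)]⟩

lemma mul_m_le_sum_info {K : ℕ} {Y : Finset (Fin (10 + K) → Fin 3)} (hY : #Y = 3 ^ 10) :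
    3 ^ 10 * m K ≤ ∑ y ∈ Y, info y := by
  have h : m K ≤ (∑ y ∈ Y, info y) / 3 ^ 10 :=
    inf'_le _ (mem_powersetCard.2 ⟨subset_univ Y, hY⟩)
  rwa [le_div_iff₀' (by norm_num)] at h

lemma lt_mul_m {d K : ℕ} {c : ℤ} (t : ℤ)
    (h : 3 ^ 10 * c < 3 ^ 10 * t - ∑ n ∈ Nat.antidiagonalTuple 3 (10 + K),
      Nat.multinomial univ n • (t - infoLower d n)⁺) :
    (c : ℝ) < d * m K := by
  obtain ⟨Y, hY, hm⟩ := exists_mul_m_eq_sum_info K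
  have h_dual := card_mul_sub_sum_posPart_le_mul_sum_info d t Y
  rw [hY, piAntidiag_univ_fin_eq_antidiagonalTuple, ← hm] at h_dual
  have h_mul : (3 ^ 10 * c : ℝ) < d * (3 ^ 10 * m K) := lt_of_lt_of_le (mod_cast h) h_dual
  linarith

lemma mul_m_lt {d K : ℕ} {c : ℤ} (t : ℤ)
    (h_lt : ∑ n ∈ Nat.antidiagonalTuple 3 (10 + K) with infoUpper d n < t,
      Nat.multinomial univ n ≤ 3 ^ 10)
    (h_le : 3 ^ 10 ≤ ∑ n ∈ Nat.antidiagonalTuple 3 (10 + K) with infoUpper d n ≤ t,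
      Nat.multinomial univ n)
    (h : 3 ^ 10 * t - ∑ n ∈ Nat.antidiagonalTuple 3 (10 + K),
      Nat.multinomial univ n • (t - infoUpper d n)⁺ < 3 ^ 10 * c) :
    d * m K < c := by
  rw [← piAntidiag_univ_fin_eq_antidiagonalTuple] at h_lt h_le h
  obtain ⟨Y, hY, h_dual⟩ := exists_card_eq_mul_sum_info_le h_lt h_le
  have h_mul : d * (3 ^ 10 * m K) < (3 ^ 10 * c : ℝ) :=
    calc d * (3 ^ 10 * m K) ≤ d * ∑ y ∈ Y, info y := by gcongr; exact mul_m_le_sum_info hY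
      _ < 3 ^ 10 * c := h_dual.trans_lt (mod_cast h)
  linarith

/-- With `A = {0,1,2}` and `N = 10`, `K = 4` is the optimal shaping order in the range
considered: `m 4 < m K` for every `K ∈ {0,1,2,3,5,6,7}`. -/
theorem stmt_3 : ∀ K ∈ ({0, 1, 2, 3, 5, 6, 7} : Finset ℕ), m 4 < m K := by
  intro K hK
  -- Each threshold is about `1000` times the `3 ^ 10`-th smallest information content in length
  -- `10 + K`; for `K = 4` it has to be the exact value after rounding up.
  have h_four : (1000 : ℕ) * m 4 < (13400 : ℤ) :=
    mul_m_lt 15350 (by decide +kernel) (by decide +kernel) (by decide +kernel)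
  have h_others : (13400 : ℤ) < (1000 : ℕ) * m K := by
    simp only [mem_insert, mem_singleton] at hK
    rcases hK with rfl | rfl | rfl | rfl | rfl | rfl | rfl
    · exact lt_mul_m 15700 (by decide +kernel)
    · exact lt_mul_m 15800 (by decide +kernel)
    · exact lt_mul_m 15400 (by decide +kernel)
    · exact lt_mul_m 15600 (by decide +kernel)
    · exact lt_mul_m 14600 (by decide +kernel)
    · exact lt_mul_m 15300 (by decide +kernel)
    · exact lt_mul_m 14900 (by decide +kernel)
  exact lt_of_mul_lt_mul_left (h_four.trans h_others) (Nat.cast_nonneg _)
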